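/- Fix τ > 0 and an integer m ≥ 1, and set T = (2m−1)τ/2. Let A : ℝ → ℂ^{2n×2n} be measurable and locally bounded with A(t + τ/2) = A(t) for a.e. t. Let ω, λ ∈ ℂ satisfy ω^{2m−1} = λ^{2m−1} = −1 and ω ≠ λ, and let ξ, η : ℝ → ℂ^{2n} be locally square integrable with ξ(t + τ/2) = ω·ξ(t) and η(t + τ/2) = λ·η(t) for a.e. t. Then ∫₀^T ⟨A(t)ξ(t), η(t)⟩ dt = 0. -/

import Mathlib

open MeasureTheory
open scoped ComplexInnerProductSpace

/-!
The scalar function `f = ⟪A ξ, η⟫` satisfies `f (t + h) = c * f t` almost everywhere, where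
`h = τ / 2`. As `‖ω‖ = 1`, the multiplier `c = conj ω * lam = ω⁻¹ * lam` is a nontrivial `N`-th root
of unity, `N = 2m - 1`. The integral of `f` over the `k`-th interval of length `h` is `c ^ k` times
that over the first, and the geometric sum `∑ k < N, c ^ k` vanishes.
-/

section Quasiperiodic

variable {𝕜 E F : Type*}

/-- Almost everywhere quasi-periodicity of `f` with shift `h` and Floquet multiplier `c`, with
respect to Lebesgue measure on `ℝ`. Almost everywhere periodicity is the case `c = 1`. -/
def AEQuasiperiodic [SMul 𝕜 E] (f : ℝ → E) (h : ℝ) (c : 𝕜) : Prop :=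
  ∀ᵐ t, f (t + h) = c • f t

namespace AEQuasiperiodic

theorem shift_add [Monoid 𝕜] [MulAction 𝕜 E] {f : ℝ → E} {h k : ℝ} {c d : 𝕜}
    (hf : AEQuasiperiodic f h c) (hf' : AEQuasiperiodic f k d) :
    AEQuasiperiodic f (h + k) (d * c) := by
  have shifted : ∀ᵐ t, f (t + h + k) = d • f (t + h) :=
    (measurePreserving_add_right volume h).quasiMeasurePreserving.ae hf'
  filter_upwards [hf, shifted] with t ht ht'
  rw [← add_assoc, ht', ht, mul_smul]

theorem shift_natCast_mul [Monoid 𝕜] [MulAction 𝕜 E] {f : ℝ → E} {h : ℝ} {c : 𝕜}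
    (hf : AEQuasiperiodic f h c) (k : ℕ) : AEQuasiperiodic f (k * h) (c ^ k) := by
  induction k with
  | zero => simp [AEQuasiperiodic]
  | succ k ih => simpa only [Nat.cast_succ, add_one_mul, pow_succ'] using ih.shift_add hf

section Integral

variable [NormedField 𝕜] [NormedAddCommGroup E] [NormedSpace 𝕜 E] {f : ℝ → E} {h : ℝ} {c : 𝕜}

theorem intervalIntegrable_translate (hf : AEQuasiperiodic f h c) {a b : ℝ}
    (hint : IntervalIntegrable f volume a b) :
    IntervalIntegrable f volume (a + h) (b + h) := by
  refine (IntervalIntegrable.comp_add_right_iff (by finiteness)).1 ((hint.smul c).congr_ae ?_)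
  filter_upwards [ae_restrict_of_ae hf] with t ht using ht.symm

variable [NormedSpace ℝ E] [SMulCommClass ℝ 𝕜 E]

theorem integral_translate (hf : AEQuasiperiodic f h c) (a b : ℝ) :
    ∫ t in (a + h)..(b + h), f t = c • ∫ t in a..b, f t := by
  rw [← intervalIntegral.integral_comp_add_right, ← intervalIntegral.integral_smul]
  exact intervalIntegral.integral_congr_ae (hf.mono fun _ ht _ => ht)

theorem integral_natCast_mul (hf : AEQuasiperiodic f h c)
    (hint : IntervalIntegrable f volume 0 h) (N : ℕ) :
    ∫ t in (0 : ℝ)..(N * h), f t = (∑ k ∈ Finset.range N, c ^ k) • ∫ t in (0 : ℝ)..h, f t := by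
  have endpoint (k : ℕ) : ((k + 1 : ℕ) : ℝ) * h = h + k * h := by push_cast; ring
  have piece_integrable (k : ℕ) :
      IntervalIntegrable f volume (k * h) ((k + 1 : ℕ) * h) := by
    simpa only [zero_add, endpoint] using (hf.shift_natCast_mul k).intervalIntegrable_translate hint
  have piece_integral (k : ℕ) :
      ∫ t in (k * h)..((k + 1 : ℕ) * h), f t = c ^ k • ∫ t in (0 : ℝ)..h, f t := by
    simpa only [zero_add, endpoint] using (hf.shift_natCast_mul k).integral_translate 0 h
  calc ∫ t in (0 : ℝ)..(N * h), f t
      = ∑ k ∈ Finset.range N, ∫ t in (k * h)..((k + 1 : ℕ) * h), f t := by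
        simpa only [Nat.cast_zero, zero_mul] using
          (intervalIntegral.sum_integral_adjacent_intervals (a := fun k : ℕ => (k : ℝ) * h)
            fun k _ => piece_integrable k).symm
    _ = (∑ k ∈ Finset.range N, c ^ k) • ∫ t in (0 : ℝ)..h, f t := by
        simp only [piece_integral, Finset.sum_smul]

theorem integral_natCast_mul_eq_zero (hf : AEQuasiperiodic f h c)
    (hint : IntervalIntegrable f volume 0 h) {N : ℕ} (hcN : c ^ N = 1) (hc : c ≠ 1) :
    ∫ t in (0 : ℝ)..(N * h), f t = 0 := by
  rw [hf.integral_natCast_mul hint, geom_sum_eq hc, hcN, sub_self, zero_div, zero_smul]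

end Integral

theorem clm_apply [Semiring 𝕜] [TopologicalSpace E] [AddCommMonoid E] [Module 𝕜 E]
    [TopologicalSpace F] [AddCommMonoid F] [Module 𝕜 F] {A : ℝ → E →L[𝕜] F} {ξ : ℝ → E}
    {h : ℝ} {c : 𝕜} (hA : ∀ᵐ t, A (t + h) = A t) (hξ : AEQuasiperiodic ξ h c) :
    AEQuasiperiodic (fun t => A t (ξ t)) h c := by
  filter_upwards [hA, hξ] with t hAt hξt
  rw [hAt, hξt, map_smul]

protected theorem inner [RCLike 𝕜] [SeminormedAddCommGroup E] [InnerProductSpace 𝕜 E] {ξ η : ℝ → E}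
    {h : ℝ} {c d : 𝕜} (hξ : AEQuasiperiodic ξ h c) (hη : AEQuasiperiodic η h d) :
    AEQuasiperiodic (fun t => inner 𝕜 (ξ t) (η t)) h (starRingEnd 𝕜 c * d) := by
  filter_upwards [hξ, hη] with t hξt hηt
  rw [hξt, hηt, inner_smul_left, inner_smul_right, smul_eq_mul, mul_assoc]

end AEQuasiperiodic

end Quasiperiodic

section Integrability

theorem memLp_top_restrict_of_locally_bounded {X G : Type*} [SeminormedAddCommGroup X]
    [MeasurableSpace X] [NormedAddCommGroup G] {μ : Measure X} {f : X → G} {K : Set X}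
    (hf : AEStronglyMeasurable f μ) (hbdd : ∀ r > (0 : ℝ), ∃ C : ℝ, ∀ x, ‖x‖ ≤ r → ‖f x‖ ≤ C)
    (hK : Bornology.IsBounded K) (hKmeas : MeasurableSet K) :
    MemLp f ⊤ (μ.restrict K) := by
  obtain ⟨r, hr, hKr⟩ := hK.exists_pos_norm_le
  obtain ⟨C, hC⟩ := hbdd r hr
  exact memLp_top_of_bound hf.restrict C
    (ae_restrict_of_forall_mem hKmeas fun x hx => hC x (hKr x hx))

theorem memLp_two_restrict_of_locallyIntegrable_sq_norm {X G : Type*} [TopologicalSpace X]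
    [MeasurableSpace X] [NormedAddCommGroup G] {μ : Measure X} {f : X → G} {K : Set X}
    (hf : AEStronglyMeasurable f μ) (hsq : LocallyIntegrable (fun x => ‖f x‖ ^ 2) μ)
    (hK : IsCompact K) : MemLp f 2 (μ.restrict K) :=
  (memLp_two_iff_integrable_sq_norm hf.restrict).2 (hsq.integrableOn_isCompact hK)

variable {𝕜 E F : Type*} [RCLike 𝕜] [NormedAddCommGroup F] [InnerProductSpace 𝕜 F]

theorem integrable_inner_of_memLp {X : Type*} [MeasurableSpace X] {μ : Measure X}
    {p q : ENNReal} [p.HolderConjugate q] {f g : X → F} (hf : MemLp f p μ) (hg : MemLp g q μ) :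
    Integrable (fun x => inner 𝕜 (f x) (g x)) μ :=
  memLp_one_iff_integrable.1 <| hf.of_bilin (inner 𝕜) 1 hg (hf.1.inner hg.1) <|
    Filter.Eventually.of_forall fun x => by
      simpa only [one_mul] using nnnorm_inner_le_nnnorm (f x) (g x)

theorem intervalIntegrable_inner_clm_apply [NormedAddCommGroup E] [NormedSpace 𝕜 E]
    {μ : Measure ℝ} {A : ℝ → E →L[𝕜] F} {ξ : ℝ → E} {η : ℝ → F}
    (hAmeas : AEStronglyMeasurable A μ)
    (hAbdd : ∀ r > (0 : ℝ), ∃ C : ℝ, ∀ t : ℝ, |t| ≤ r → ‖A t‖ ≤ C)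
    (hξmeas : AEStronglyMeasurable ξ μ) (hηmeas : AEStronglyMeasurable η μ)
    (hξsq : LocallyIntegrable (fun t => ‖ξ t‖ ^ 2) μ)
    (hηsq : LocallyIntegrable (fun t => ‖η t‖ ^ 2) μ) (a b : ℝ) :
    IntervalIntegrable (fun t => inner 𝕜 (A t (ξ t)) (η t)) μ a b := by
  have hK : IsCompact (Set.uIcc a b) := isCompact_uIcc
  have hA : MemLp A ⊤ (μ.restrict (Set.uIcc a b)) :=
    memLp_top_restrict_of_locally_bounded hAmeas hAbdd hK.isBounded measurableSet_uIcc
  have hAξ : MemLp (fun t => A t (ξ t)) 2 (μ.restrict (Set.uIcc a b)) :=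
    (ContinuousLinearMap.id 𝕜 (E →L[𝕜] F)).memLp_of_bilin 2 hA
      (memLp_two_restrict_of_locallyIntegrable_sq_norm hξmeas hξsq hK)
  have hη := memLp_two_restrict_of_locallyIntegrable_sq_norm hηmeas hηsq hK
  exact IntegrableOn.intervalIntegrable (integrable_inner_of_memLp hAξ hη)

end Integrability

theorem conj_mul_ne_one_of_norm_eq_one {𝕜 : Type*} [RCLike 𝕜] {z w : 𝕜} (hz : ‖z‖ = 1)
    (hne : z ≠ w) : starRingEnd 𝕜 z * w ≠ 1 := by
  have hz0 : z ≠ 0 := norm_ne_zero_iff.1 (hz ▸ one_ne_zero)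
  rwa [← RCLike.inv_eq_conj hz, Ne, inv_mul_eq_one₀ hz0]

theorem conj_mul_pow_eq_one_of_pow_eq {𝕜 : Type*} [RCLike 𝕜] {z w : 𝕜} {N : ℕ} (hz : ‖z‖ = 1)
    (hpow : z ^ N = w ^ N) : (starRingEnd 𝕜 z * w) ^ N = 1 := by
  rw [mul_pow, ← hpow, ← mul_pow, RCLike.conj_mul, hz]
  simp

theorem pairing_distinct_roots_vanishes_general {𝕜 E F : Type*} [RCLike 𝕜]
    [TopologicalSpace E] [AddCommMonoid E] [Module 𝕜 E] [SeminormedAddCommGroup F]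
    [InnerProductSpace 𝕜 F] {A : ℝ → E →L[𝕜] F} {ξ : ℝ → E} {η : ℝ → F} {h : ℝ} {ω lam : 𝕜}
    {N : ℕ} (hω : ‖ω‖ = 1) (hpow : ω ^ N = lam ^ N) (hne : ω ≠ lam)
    (hA : ∀ᵐ t, A (t + h) = A t) (hξ : AEQuasiperiodic ξ h ω) (hη : AEQuasiperiodic η h lam)
    (hint : IntervalIntegrable (fun t => inner 𝕜 (A t (ξ t)) (η t)) volume 0 h) :
    ∫ t in (0 : ℝ)..(N * h), inner 𝕜 (A t (ξ t)) (η t) = 0 :=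
  ((hξ.clm_apply hA).inner hη).integral_natCast_mul_eq_zero hint
    (conj_mul_pow_eq_one_of_pow_eq hω hpow) (conj_mul_ne_one_of_norm_eq_one hω hne)

/-- For a locally bounded measurable `τ/2`-periodic family `A(t)` of operators on `ℂ^{2n}`
and functions `ξ, η` quasi-periodic along distinct `(2m−1)`-th roots `ω ≠ λ` of `−1`,
the pairing `∫₀^T ⟨A ξ, η⟩ dt` vanishes, where `T = (2m−1)τ/2`. -/
theorem pairing_distinct_roots_vanishes
    (n : ℕ) (τ : ℝ) (hτ : 0 < τ) (m : ℕ) (hm : 1 ≤ m)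
    (A : ℝ → (EuclideanSpace ℂ (Fin (2 * n)) →L[ℂ] EuclideanSpace ℂ (Fin (2 * n))))
    (hAmeas : AEStronglyMeasurable A volume)
    (hAbdd : ∀ r > (0 : ℝ), ∃ C : ℝ, ∀ t : ℝ, |t| ≤ r → ‖A t‖ ≤ C)
    (hAper : ∀ᵐ t ∂volume, A (t + τ / 2) = A t)
    (ω lam : ℂ) (hω : ω ^ (2 * m - 1) = -1) (hlam : lam ^ (2 * m - 1) = -1) (hne : ω ≠ lam)
    (ξ η : ℝ → EuclideanSpace ℂ (Fin (2 * n)))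
    (hξmeas : AEStronglyMeasurable ξ volume) (hηmeas : AEStronglyMeasurable η volume)
    (hξsq : LocallyIntegrable (fun t => ‖ξ t‖ ^ 2) volume)
    (hηsq : LocallyIntegrable (fun t => ‖η t‖ ^ 2) volume)
    (hξ : ∀ᵐ t ∂volume, ξ (t + τ / 2) = ω • ξ t)
    (hη : ∀ᵐ t ∂volume, η (t + τ / 2) = lam • η t) :
    (∫ t in (0 : ℝ)..((2 * m - 1 : ℕ) * τ / 2), ⟪A t (ξ t), η t⟫) = 0 := by
  have hω_norm : ‖ω‖ = 1 :=
    Complex.norm_eq_one_of_pow_eq_one (n := (2 * m - 1) * 2) (by rw [pow_mul, hω, neg_one_sq])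
      (by omega)
  rw [mul_div_assoc]
  exact pairing_distinct_roots_vanishes_general hω_norm (hω.trans hlam.symm) hne hAper hξ hη
    (intervalIntegrable_inner_clm_apply hAmeas hAbdd hξmeas hηmeas hξsq hηsq 0 (τ / 2))
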